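/- lim_{x→∞} [12x⁴(x+1)²([ψ'(x)]² + ψ''(x)) − x² − 12]/x = 4. -/

import Mathlib

/-- The digamma function `ψ(x) = Γ'(x)/Γ(x)`. -/
noncomputable def digamma (x : ℝ) : ℝ := deriv Real.Gamma x / Real.Gamma x

/-!
Since `log ∘ Γ` is convex, `ψ` is monotone, and a monotone solution of
`f (x + 1) - f x = 1 / x` is unique up to a constant; hence
`ψ x = -γ + ∑ (1 / (n + 1) - 1 / (x + n))`, and `ψ'`, `ψ''` are multiples of the Hurwitz series
`∑ 1 / (x + n) ^ k` for `k = 2, 3`. That series vanishes at infinity and its difference under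
`x ↦ x + 1` is `1 / x ^ k`, so it is squeezed between any two rational functions vanishing at
infinity whose differences bracket `1 / x ^ k`. The truncated Stirling expansions have this
property, which yields `ψ' ^ 2 + ψ'' = 1 / (12 x ^ 4) + 1 / (6 x ^ 5) + o(1 / x ^ 5)`.
-/

open Filter Topology Set Asymptotics

section DifferenceEquations

variable {f g : ℝ → ℝ} {a x y : ℝ}

lemma tendsto_add_natCast_sub (hf : Tendsto (fun x ↦ f (x + 1) - f x) atTop (𝓝 0)) (m : ℕ) :
    Tendsto (fun x ↦ f (x + m) - f x) atTop (𝓝 0) := by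
  induction m with
  | zero => simp
  | succ m ih =>
    have hshift := hf.comp (tendsto_atTop_add_const_right atTop (m : ℝ) tendsto_id)
    simpa [Function.comp_def, add_assoc] using hshift.add ih

lemma tendsto_add_sub_of_monotoneOn (hmono : MonotoneOn f (Ioi a))
    (hf : Tendsto (fun x ↦ f (x + 1) - f x) atTop (𝓝 0)) {c : ℝ} (hc : 0 ≤ c) :
    Tendsto (fun x ↦ f (x + c) - f x) atTop (𝓝 0) := by
  refine squeeze_zero' ?_ ?_ (tendsto_add_natCast_sub hf ⌈c⌉₊) <;>
    filter_upwards [eventually_gt_atTop a] with x hx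
  · exact sub_nonneg.2 (hmono hx (show a < x + c by linarith) (by linarith))
  · have hceil : x + c ≤ x + ⌈c⌉₊ := by gcongr; exact Nat.le_ceil c
    exact sub_le_sub_right
      (hmono (show a < x + c by linarith) (show a < x + ⌈c⌉₊ by linarith) hceil) _

-- `f - g` is `1`-periodic, and monotonicity forces its oscillation to vanish at infinity.
lemma sub_eq_sub_of_monotoneOn_of_le (hf : MonotoneOn f (Ioi a)) (hg : MonotoneOn g (Ioi a))
    (hfg : ∀ z, a < z → f (z + 1) - f z = g (z + 1) - g z)
    (hf_lim : Tendsto (fun z ↦ f (z + 1) - f z) atTop (𝓝 0)) (hx : a < x) (hxy : x ≤ y) :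
    f x - g x = f y - g y := by
  have hg_lim : Tendsto (fun z ↦ g (z + 1) - g z) atTop (𝓝 0) :=
    hf_lim.congr' ((eventually_gt_atTop a).mono hfg)
  have periodic (z : ℝ) (hz : a < z) (n : ℕ) : f (z + n) - g (z + n) = f z - g z := by
    induction n with
    | zero => simp
    | succ n ih =>
      have hstep := hfg (z + n) (by linarith [n.cast_nonneg (α := ℝ)])
      push_cast
      rw [← add_assoc]
      linarith
  have hlim := ((tendsto_add_sub_of_monotoneOn hf hf_lim (sub_nonneg.2 hxy)).sub
    (tendsto_add_sub_of_monotoneOn hg hg_lim (sub_nonneg.2 hxy))).comp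
      (tendsto_atTop_add_const_left atTop x tendsto_natCast_atTop_atTop)
  have hconst (n : ℕ) : f (x + n + (y - x)) - f (x + n) - (g (x + n + (y - x)) - g (x + n)) =
      f y - g y - (f x - g x) := by
    rw [show x + n + (y - x) = y + n by ring, ← periodic x hx n,
      ← periodic y (hx.trans_le hxy) n]
    ring
  have := tendsto_nhds_unique (hlim.congr hconst) tendsto_const_nhds
  linarith

lemma sub_eq_sub_of_monotoneOn (hf : MonotoneOn f (Ioi a)) (hg : MonotoneOn g (Ioi a))
    (hfg : ∀ z, a < z → f (z + 1) - f z = g (z + 1) - g z)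
    (hf_lim : Tendsto (fun z ↦ f (z + 1) - f z) atTop (𝓝 0)) (hx : a < x) (hy : a < y) :
    f x - g x = f y - g y := by
  rcases le_total x y with hxy | hyx
  · exact sub_eq_sub_of_monotoneOn_of_le hf hg hfg hf_lim hx hxy
  · exact (sub_eq_sub_of_monotoneOn_of_le hf hg hfg hf_lim hy hyx).symm

lemma le_of_sub_add_one_le (hfg : ∀ y, x ≤ y → f y - f (y + 1) ≤ g y - g (y + 1))
    (hf : Tendsto (fun n : ℕ ↦ f (x + n)) atTop (𝓝 0))
    (hg : Tendsto (fun n : ℕ ↦ g (x + n)) atTop (𝓝 0)) : f x ≤ g x := by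
  have hanti : Antitone fun n : ℕ ↦ g (x + n) - f (x + n) := by
    refine antitone_nat_of_succ_le fun n ↦ ?_
    have hstep := hfg (x + n) (by simp)
    push_cast
    rw [← add_assoc]
    linarith
  have := hanti.le_of_tendsto (by simpa using hg.sub hf) 0
  simpa using this

end DifferenceEquations

lemma tendsto_const_div_mul_pow (a b : ℝ) {n : ℕ} (hn : n ≠ 0) :
    Tendsto (fun x : ℝ ↦ a / (b * x ^ n)) atTop (𝓝 0) := by
  simpa [div_eq_mul_inv, mul_assoc, mul_comm b⁻¹] using
    (tendsto_pow_atTop hn).inv_tendsto_atTop.const_mul (a / b)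

/-- The Hurwitz zeta function `ζ(k, x) = ∑ 1 / (x + n) ^ k` of a natural exponent `k` and a real
parameter `x`; it is only meaningful for `2 ≤ k`. -/
noncomputable def hurwitzSeries (k : ℕ) (x : ℝ) : ℝ := ∑' n : ℕ, 1 / (x + n) ^ k

section HurwitzSeries

variable {k : ℕ} {x : ℝ}

lemma summable_one_div_add_natCast_pow (hk : 1 < k) (hx : 0 < x) :
    Summable fun n : ℕ ↦ 1 / (x + n) ^ k := by
  refine ((Real.summable_one_div_nat_add_rpow x k).2 (mod_cast hk)).congr fun n ↦ ?_
  rw [abs_of_pos (by positivity), Real.rpow_natCast, add_comm]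

lemma hurwitzSeries_sub_add_one (hk : 1 < k) (hx : 0 < x) :
    hurwitzSeries k x - hurwitzSeries k (x + 1) = 1 / x ^ k := by
  have hshift : hurwitzSeries k (x + 1) = ∑' n : ℕ, 1 / (x + (n + 1 : ℕ)) ^ k :=
    tsum_congr fun n ↦ by push_cast; ring_nf
  rw [hshift, hurwitzSeries, (summable_one_div_add_natCast_pow hk hx).tsum_eq_zero_add]
  simp

lemma tendsto_hurwitzSeries_add_natCast (k : ℕ) (x : ℝ) :
    Tendsto (fun m : ℕ ↦ hurwitzSeries k (x + m)) atTop (𝓝 0) := by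
  refine (tendsto_sum_nat_add fun n : ℕ ↦ 1 / (x + n) ^ k).congr fun m ↦ tsum_congr fun n ↦ ?_
  push_cast
  ring_nf

lemma hasDerivAt_one_div_add_pow (k : ℕ) {c : ℝ} (hx : x + c ≠ 0) :
    HasDerivAt (fun y ↦ 1 / (y + c) ^ k) (-k * (1 / (x + c) ^ (k + 1))) x := by
  have hzpow := (hasDerivAt_zpow (-k) (x + c) (.inl hx)).comp_add_const x c
  rw [← neg_add', zpow_neg, Int.cast_neg, Int.cast_natCast, ← Nat.cast_succ, zpow_natCast] at hzpow
  simpa only [one_div, zpow_neg, zpow_natCast] using hzpow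

lemma norm_one_div_add_natCast_pow_le {a : ℝ} (ha : 0 < a) (hx : a < x) (k n : ℕ) :
    ‖1 / (x + n) ^ k‖ ≤ 1 / (a + n) ^ k := by
  have hx0 : 0 < x := ha.trans hx
  rw [Real.norm_of_nonneg (by positivity)]
  gcongr

lemma hasDerivAt_hurwitzSeries (hk : 1 < k) (hx : 0 < x) :
    HasDerivAt (hurwitzSeries k) (-k * hurwitzSeries (k + 1) x) x := by
  obtain ⟨a, ha, hax⟩ := exists_between hx
  rw [hurwitzSeries, ← tsum_mul_left]
  refine hasDerivAt_tsum_of_isPreconnected (u := fun n : ℕ ↦ k * (1 / (a + n) ^ (k + 1)))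
    ((summable_one_div_add_natCast_pow (by lia) ha).mul_left _) isOpen_Ioi isPreconnected_Ioi
    (fun n y hy ↦ hasDerivAt_one_div_add_pow k ?_) (fun n y hy ↦ ?_) hax
    (summable_one_div_add_natCast_pow hk hx) hax
  · have : 0 < y := ha.trans hy
    positivity
  · rw [norm_mul, norm_neg, RCLike.norm_natCast]
    gcongr
    exact norm_one_div_add_natCast_pow_le ha hy _ n

lemma hurwitzSeries_le_of_forall_le {f : ℝ → ℝ} (hk : 1 < k) (hx : 0 < x)
    (hf_lim : Tendsto f atTop (𝓝 0)) (hf : ∀ y, 0 < y → 1 / y ^ k ≤ f y - f (y + 1)) :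
    hurwitzSeries k x ≤ f x := by
  refine le_of_sub_add_one_le (fun y hxy ↦ ?_) (tendsto_hurwitzSeries_add_natCast k x)
    (hf_lim.comp (tendsto_atTop_add_const_left _ x tendsto_natCast_atTop_atTop))
  have hy : 0 < y := hx.trans_le hxy
  exact (hurwitzSeries_sub_add_one hk hy).trans_le (hf y hy)

lemma le_hurwitzSeries_of_forall_le {f : ℝ → ℝ} (hk : 1 < k) (hx : 0 < x)
    (hf_lim : Tendsto f atTop (𝓝 0)) (hf : ∀ y, 0 < y → f y - f (y + 1) ≤ 1 / y ^ k) :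
    f x ≤ hurwitzSeries k x := by
  refine le_of_sub_add_one_le (fun y hxy ↦ ?_)
    (hf_lim.comp (tendsto_atTop_add_const_left _ x tendsto_natCast_atTop_atTop))
    (tendsto_hurwitzSeries_add_natCast k x)
  have hy : 0 < y := hx.trans_le hxy
  exact (hf y hy).trans_eq (hurwitzSeries_sub_add_one hk hy).symm

lemma hurwitzSeries_two_le (hx : 0 < x) :
    hurwitzSeries 2 x ≤ 1 / x + 1 / (2 * x ^ 2) + 1 / (6 * x ^ 3) := by
  refine hurwitzSeries_le_of_forall_le one_lt_two hx
    (f := fun x ↦ 1 / x + 1 / (2 * x ^ 2) + 1 / (6 * x ^ 3)) ?_ fun y hy ↦ sub_nonneg.1 ?_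
  · simpa using (tendsto_const_div_mul_pow 1 1 one_ne_zero).add
      (tendsto_const_div_mul_pow 1 2 two_ne_zero) |>.add
      (tendsto_const_div_mul_pow 1 6 three_ne_zero)
  · calc
      0 ≤ 1 / (6 * (y * (y + 1)) ^ 3) := by positivity
      _ = _ := by field_simp; ring

lemma le_hurwitzSeries_two (hx : 0 < x) :
    1 / x + 1 / (2 * x ^ 2) + 1 / (6 * x ^ 3) - 1 / (30 * x ^ 5) ≤ hurwitzSeries 2 x := by
  refine le_hurwitzSeries_of_forall_le one_lt_two hx
    (f := fun x ↦ 1 / x + 1 / (2 * x ^ 2) + 1 / (6 * x ^ 3) - 1 / (30 * x ^ 5)) ?_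
    fun y hy ↦ sub_nonneg.1 ?_
  · simpa using (tendsto_const_div_mul_pow 1 1 one_ne_zero).add
      (tendsto_const_div_mul_pow 1 2 two_ne_zero) |>.add
      (tendsto_const_div_mul_pow 1 6 three_ne_zero) |>.sub
      (tendsto_const_div_mul_pow 1 30 (by norm_num : 5 ≠ 0))
  · calc
      0 ≤ (5 * (y * (y + 1)) + 1) / (30 * (y * (y + 1)) ^ 5) := by positivity
      _ = _ := by field_simp; ring

lemma hurwitzSeries_three_le (hx : 0 < x) :
    hurwitzSeries 3 x ≤ 1 / (2 * x ^ 2) + 1 / (2 * x ^ 3) + 1 / (4 * x ^ 4) := by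
  refine hurwitzSeries_le_of_forall_le (by norm_num) hx
    (f := fun x ↦ 1 / (2 * x ^ 2) + 1 / (2 * x ^ 3) + 1 / (4 * x ^ 4)) ?_
    fun y hy ↦ sub_nonneg.1 ?_
  · simpa using (tendsto_const_div_mul_pow 1 2 two_ne_zero).add
      (tendsto_const_div_mul_pow 1 2 three_ne_zero) |>.add
      (tendsto_const_div_mul_pow 1 4 four_ne_zero)
  · calc
      0 ≤ (2 * y + 1) / (4 * (y * (y + 1)) ^ 4) := by positivity
      _ = _ := by field_simp; ring

lemma le_hurwitzSeries_three (hx : 0 < x) :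
    1 / (2 * x ^ 2) + 1 / (2 * x ^ 3) + 1 / (4 * x ^ 4) - 1 / (12 * x ^ 6) ≤
      hurwitzSeries 3 x := by
  refine le_hurwitzSeries_of_forall_le (by norm_num) hx
    (f := fun x ↦ 1 / (2 * x ^ 2) + 1 / (2 * x ^ 3) + 1 / (4 * x ^ 4) - 1 / (12 * x ^ 6)) ?_
    fun y hy ↦ sub_nonneg.1 ?_
  · simpa using (tendsto_const_div_mul_pow 1 2 two_ne_zero).add
      (tendsto_const_div_mul_pow 1 2 three_ne_zero) |>.add
      (tendsto_const_div_mul_pow 1 4 four_ne_zero) |>.sub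
      (tendsto_const_div_mul_pow 1 12 (by norm_num : 6 ≠ 0))
  · calc
      0 ≤ (2 * y + 1) ^ 3 / (12 * (y * (y + 1)) ^ 6) := by positivity
      _ = _ := by field_simp; ring

end HurwitzSeries

/-- The series `∑ (1 / (n + 1) - 1 / (x + n))`, which equals `ψ x + γ` for `0 < x`. -/
noncomputable def digammaSeries (x : ℝ) : ℝ := ∑' n : ℕ, (1 / ((n : ℝ) + 1) - 1 / (x + n))

section Digamma

variable {x : ℝ}

lemma hasDerivAt_one_div_sub_one_div_add (c : ℝ) {d : ℝ} (hx : x + d ≠ 0) :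
    HasDerivAt (fun y ↦ c - 1 / (y + d)) (1 / (x + d) ^ 2) x := by
  simpa using (hasDerivAt_one_div_add_pow 1 hx).const_sub c

lemma summable_digammaSeries (hx : 0 < x) :
    Summable fun n : ℕ ↦ 1 / ((n : ℝ) + 1) - 1 / (x + n) := by
  obtain ⟨a, ha, hax⟩ := exists_between (lt_min hx one_pos)
  refine summable_of_summable_hasDerivAt_of_isPreconnected
    (summable_one_div_add_natCast_pow one_lt_two ha) isOpen_Ioi isPreconnected_Ioi
    (fun n y hy ↦ hasDerivAt_one_div_sub_one_div_add _ ?_)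
    (fun n y hy ↦ norm_one_div_add_natCast_pow_le ha hy 2 n) (y₀ := 1) (hax.trans_le inf_le_right)
    (by simp [add_comm, summable_zero]) (hax.trans_le inf_le_left)
  have : 0 < y := ha.trans hy
  positivity

lemma hasDerivAt_digammaSeries (hx : 0 < x) :
    HasDerivAt digammaSeries (hurwitzSeries 2 x) x := by
  obtain ⟨a, ha, hax⟩ := exists_between hx
  refine hasDerivAt_tsum_of_isPreconnected
    (summable_one_div_add_natCast_pow one_lt_two ha) isOpen_Ioi isPreconnected_Ioi
    (fun n y hy ↦ hasDerivAt_one_div_sub_one_div_add _ ?_)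
    (fun n y hy ↦ norm_one_div_add_natCast_pow_le ha hy 2 n) hax (summable_digammaSeries hx) hax
  have : 0 < y := ha.trans hy
  positivity

lemma monotoneOn_digammaSeries : MonotoneOn digammaSeries (Ioi 0) := by
  intro x (hx : 0 < x) y hy hxy
  refine (summable_digammaSeries hx).tsum_le_tsum (fun n ↦ ?_) (summable_digammaSeries hy)
  gcongr

lemma hasSum_one_div_add_sub_one_div_add_succ (hx : 0 < x) :
    HasSum (fun n : ℕ ↦ 1 / (x + n) - 1 / (x + (n + 1 : ℕ))) (1 / x) := by
  have hlim : Tendsto (fun n : ℕ ↦ 1 / (x + n)) atTop (𝓝 0) :=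
    tendsto_const_nhds.div_atTop
      (tendsto_atTop_add_const_left _ _ tendsto_natCast_atTop_atTop)
  rw [hasSum_iff_tendsto_nat_of_nonneg]
  · simp_rw [Finset.sum_range_sub' fun n : ℕ ↦ 1 / (x + n)]
    simpa using hlim.const_sub (1 / x)
  · intro n
    rw [sub_nonneg]
    gcongr
    simp

lemma digammaSeries_add_one_sub (hx : 0 < x) :
    digammaSeries (x + 1) - digammaSeries x = 1 / x := by
  rw [digammaSeries, digammaSeries, ← (summable_digammaSeries (by positivity)).tsum_sub
    (summable_digammaSeries hx), ← (hasSum_one_div_add_sub_one_div_add_succ hx).tsum_eq]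
  refine tsum_congr fun n ↦ ?_
  push_cast
  ring_nf

lemma hasDerivAt_log_Gamma (hx : 0 < x) :
    HasDerivAt (Real.log ∘ Real.Gamma) (digamma x) x := by
  have hdiff : DifferentiableAt ℝ Real.Gamma x :=
    Real.differentiableAt_Gamma fun m ↦ by linarith [m.cast_nonneg (α := ℝ)]
  exact hdiff.hasDerivAt.log (Real.Gamma_pos_of_pos hx).ne'

lemma monotoneOn_digamma : MonotoneOn digamma (Ioi 0) := by
  have hderiv (x : ℝ) (hx : x ∈ Ioi 0) : deriv (Real.log ∘ Real.Gamma) x = digamma x :=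
    (hasDerivAt_log_Gamma hx).deriv
  exact (Real.convexOn_log_Gamma.monotoneOn_deriv
    fun x hx ↦ (hasDerivAt_log_Gamma hx).differentiableAt).congr hderiv

lemma digamma_add_one_sub (hx : 0 < x) : digamma (x + 1) - digamma x = 1 / x := by
  have hshift : HasDerivAt (fun y ↦ Real.log (Real.Gamma (y + 1))) (digamma (x + 1)) x :=
    (hasDerivAt_log_Gamma (by positivity)).comp_add_const x 1
  have hsum : HasDerivAt (fun y ↦ Real.log (Real.Gamma y) + Real.log y) (digamma x + x⁻¹) x :=
    (hasDerivAt_log_Gamma hx).add (Real.hasDerivAt_log hx.ne')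
  have heq : (fun y ↦ Real.log (Real.Gamma (y + 1))) =ᶠ[𝓝 x]
      fun y ↦ Real.log (Real.Gamma y) + Real.log y := by
    filter_upwards [eventually_gt_nhds hx] with y hy
    rw [Real.Gamma_add_one hy.ne', Real.log_mul hy.ne' (Real.Gamma_pos_of_pos hy).ne', add_comm]
  rw [hshift.unique (hsum.congr_of_eventuallyEq heq), add_sub_cancel_left, one_div]

lemma digamma_one : digamma 1 = -Real.eulerMascheroniConstant := by
  rw [digamma, Real.hasDerivAt_Gamma_one.deriv, Real.Gamma_one, div_one]

lemma digamma_eq_digammaSeries (hx : 0 < x) :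
    digamma x = digammaSeries x - Real.eulerMascheroniConstant := by
  have hlim : Tendsto (fun z ↦ digamma (z + 1) - digamma z) atTop (𝓝 0) := by
    refine tendsto_inv_atTop_zero.congr' ?_
    filter_upwards [eventually_gt_atTop 0] with z hz using by rw [digamma_add_one_sub hz, one_div]
  have hsub := sub_eq_sub_of_monotoneOn monotoneOn_digamma monotoneOn_digammaSeries
    (fun z hz ↦ (digamma_add_one_sub hz).trans (digammaSeries_add_one_sub hz).symm)
    hlim hx one_pos
  have hone : digammaSeries 1 = 0 := by simp [digammaSeries, add_comm]
  rw [digamma_one, hone] at hsub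
  linarith

lemma deriv_digamma (hx : 0 < x) : deriv digamma x = hurwitzSeries 2 x := by
  have heq : digamma =ᶠ[𝓝 x] fun y ↦ digammaSeries y - Real.eulerMascheroniConstant := by
    filter_upwards [eventually_gt_nhds hx] with y hy using digamma_eq_digammaSeries hy
  rw [heq.deriv_eq, ((hasDerivAt_digammaSeries hx).sub_const _).deriv]

lemma deriv_deriv_digamma (hx : 0 < x) : deriv (deriv digamma) x = -2 * hurwitzSeries 3 x := by
  have heq : deriv digamma =ᶠ[𝓝 x] hurwitzSeries 2 := by
    filter_upwards [eventually_gt_nhds hx] with y hy using deriv_digamma hy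
  rw [heq.deriv_eq, (hasDerivAt_hurwitzSeries one_lt_two hx).deriv, Nat.cast_ofNat]

end Digamma

lemma deriv_digamma_sub_isBigO :
    (fun x ↦ deriv digamma x - (1 / x + 1 / (2 * x ^ 2) + 1 / (6 * x ^ 3))) =O[atTop]
      fun x ↦ 1 / x ^ 5 := by
  refine .of_bound (1 / 30) ?_
  filter_upwards [eventually_gt_atTop 0] with x hx
  have hbound : 1 / 30 * (1 / x ^ 5) = 1 / (30 * x ^ 5) := by ring
  rw [deriv_digamma hx, Real.norm_eq_abs, Real.norm_of_nonneg (by positivity), hbound, abs_le]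
  have hpos : 0 < 1 / (30 * x ^ 5) := by positivity
  constructor <;> linarith [le_hurwitzSeries_two hx, hurwitzSeries_two_le hx]

lemma deriv_deriv_digamma_add_isBigO :
    (fun x ↦ deriv (deriv digamma) x + (1 / x ^ 2 + 1 / x ^ 3 + 1 / (2 * x ^ 4))) =O[atTop]
      fun x ↦ 1 / x ^ 6 := by
  refine .of_bound (1 / 6) ?_
  filter_upwards [eventually_gt_atTop 0] with x hx
  have hmain : 1 / x ^ 2 + 1 / x ^ 3 + 1 / (2 * x ^ 4) =
      2 * (1 / (2 * x ^ 2) + 1 / (2 * x ^ 3) + 1 / (4 * x ^ 4)) := by ring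
  have hbound : 1 / 6 * (1 / x ^ 6) = 2 * (1 / (12 * x ^ 6)) := by ring
  rw [deriv_deriv_digamma hx, Real.norm_eq_abs, Real.norm_of_nonneg (by positivity), hmain,
    hbound, abs_le]
  have hpos : 0 < 1 / (12 * x ^ 6) := by positivity
  constructor <;> linarith [le_hurwitzSeries_three hx, hurwitzSeries_three_le hx]

lemma tendsto_pow_mul_of_isBigO {f : ℝ → ℝ} {n : ℕ}
    (hf : f =O[atTop] fun x ↦ 1 / x ^ (n + 1)) :
    Tendsto (fun x ↦ x ^ n * f x) atTop (𝓝 0) := by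
  refine ((isBigO_refl (fun x : ℝ ↦ x ^ n) atTop).mul hf).trans_tendsto
    (tendsto_inv_atTop_zero.congr' ?_)
  filter_upwards [eventually_ne_atTop 0] with x hx
  field_simp
  ring

lemma tendsto_pow_five_mul_deriv_digamma_sq_add :
    Tendsto (fun x ↦ x ^ 5 *
      (deriv digamma x ^ 2 + deriv (deriv digamma) x - 1 / (12 * x ^ 4))) atTop (𝓝 (1 / 6)) := by
  have hw : Tendsto (fun x : ℝ ↦ x⁻¹) atTop (𝓝 0) := tendsto_inv_atTop_zero
  have hp := tendsto_pow_mul_of_isBigO deriv_digamma_sub_isBigO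
  have hq := tendsto_pow_mul_of_isBigO deriv_deriv_digamma_add_isBigO
  set p := fun x ↦ x ^ 4 * (deriv digamma x - (1 / x + 1 / (2 * x ^ 2) + 1 / (6 * x ^ 3)))
  set q := fun x ↦
    x ^ 5 * (deriv (deriv digamma) x + (1 / x ^ 2 + 1 / x ^ 3 + 1 / (2 * x ^ 4)))
  -- the scaled quantity is this polynomial evaluated at `v = (1 / x, p x, q x)`
  have hpoly : Continuous fun v : ℝ × ℝ × ℝ ↦ 1 / 6 + v.1 / 36 + v.2.2 +
      2 * v.2.1 * (1 + v.1 / 2 + v.1 ^ 2 / 6) + v.2.1 ^ 2 * v.1 ^ 3 := by fun_prop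
  refine ((hpoly.tendsto' (0, 0, 0) (1 / 6) (by norm_num)).comp
    (hw.prodMk_nhds (hp.prodMk_nhds hq))).congr' ?_
  filter_upwards [eventually_ne_atTop 0] with x hx
  simp only [Function.comp_apply, p, q]
  field_simp
  ring

theorem stmt_18 :
    Filter.Tendsto
      (fun x : ℝ =>
        (12 * x ^ 4 * (x + 1) ^ 2 *
            ((deriv digamma x) ^ 2 + deriv (deriv digamma) x) - x ^ 2 - 12) / x)
      Filter.atTop (nhds 4) := by
  have hw : Tendsto (fun x : ℝ ↦ x⁻¹) atTop (𝓝 0) := tendsto_inv_atTop_zero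
  have hlim := ((hw.const_mul 11).const_sub 2).add
    ((((hw.const_add 1).pow 2).const_mul 12).mul tendsto_pow_five_mul_deriv_digamma_sq_add)
  have hvalue : 2 - 11 * 0 + 12 * (1 + 0) ^ 2 * (1 / 6) = (4 : ℝ) := by norm_num
  rw [hvalue] at hlim
  refine hlim.congr' ?_
  filter_upwards [eventually_ne_atTop 0] with x hx
  field_simp
  ring
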